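/- If equations (E1), (E2) and (E3) hold on I, then 2 + α₂''(s) = α₁''(s)(cot(α₁(s)) − tan(α₁(s))) and α₂''(s) = −α₁'(s)² for all s ∈ I. -/

import Mathlib

/-!
Write `a = α₁'` and `b = α₂'`. Subtracting (E3) from (E2) gives
`(a' - a b) (tan α₁ + cot α₁) = 0`, and `tan + cot = 1 / (sin cos)` never vanishes, so `a' = a b`
and `lam = -2 b²`. With `a² + b² = 1`, (E1) becomes the first identity. Differentiating
`a² + b² = 1` gives `b (b' + a²) = 0`, which is the second identity wherever `b ≠ 0`. At a zero of
`b`, `a' = 0`, hence `b' = -2` by the first identity; such a zero is isolated, and the second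
identity extends to it by continuity.
-/

/-- A function `f`, continuous at `s`, with `g * f = 0` near `s` vanishes at `s` as soon as `g` and
its derivative do not both vanish there: either `g s ≠ 0`, or `s` is an isolated zero of `g`. -/
theorem eq_zero_of_mul_eventually_eq_zero {f g : ℝ → ℝ} {s g' : ℝ} (hf : ContinuousAt f s)
    (hg : HasDerivAt g g' s) (hmul : ∀ᶠ t in nhds s, g t * f t = 0) (hne : g s = 0 → g' ≠ 0) :
    f s = 0 := by
  by_cases h0 : g s = 0
  · have hev : ∀ᶠ t in nhdsWithin s {s}ᶜ, g t ≠ 0 := hg.eventually_ne (hne h0)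
    have hz : f =ᶠ[nhdsWithin s {s}ᶜ] fun _ => 0 := by
      filter_upwards [hev, hmul.filter_mono nhdsWithin_le_nhds] with t h1 h2
      exact (mul_eq_zero.mp h2).resolve_left h1
    exact tendsto_nhds_unique (hf.tendsto.mono_left nhdsWithin_le_nhds)
      (tendsto_const_nhds.congr' hz.symm)
  · exact (mul_eq_zero.mp hmul.self_of_nhds).resolve_left h0

/-- if (E1), (E2) and (E3) hold on `I`, then
`2 + α₂'' = α₁''(cot α₁ − tan α₁)` and `α₂'' = −(α₁')²` on `I`. -/
theorem stmt9
    (I : Set ℝ) (hIopen : IsOpen I) (hIne : I.Nonempty) (hIconn : I.OrdConnected)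
    (α₁ α₂ lam : ℝ → ℝ)
    (hα₁ : ContDiff ℝ (⊤ : ℕ∞) α₁) (hα₂ : ContDiff ℝ (⊤ : ℕ∞) α₂) (hlam : ContDiff ℝ (⊤ : ℕ∞) lam)
    (hunit : ∀ s ∈ I, (deriv α₁ s) ^ 2 + (deriv α₂ s) ^ 2 = 1)
    (hsc : ∀ s ∈ I, Real.sin (α₁ s) * Real.cos (α₁ s) ≠ 0)
    (hE1 : ∀ s ∈ I, deriv (deriv α₂) s
        + deriv (deriv α₁) s * (Real.tan (α₁ s) - Real.cot (α₁ s))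
        + 2 * (deriv α₁ s) ^ 2 = lam s)
    (hE2 : ∀ s ∈ I, (deriv (deriv α₁) s - deriv α₁ s * deriv α₂ s) * Real.tan (α₁ s)
        - 2 * (deriv α₂ s) ^ 2 = lam s)
    (hE3 : ∀ s ∈ I, (deriv α₁ s * deriv α₂ s - deriv (deriv α₁) s) * Real.cot (α₁ s)
        - 2 * (deriv α₂ s) ^ 2 = lam s) :
    ∀ s ∈ I, 2 + deriv (deriv α₂) s
        = deriv (deriv α₁) s * (Real.cot (α₁ s) - Real.tan (α₁ s)) ∧
      deriv (deriv α₂) s = -(deriv α₁ s) ^ 2 := by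
  have hd₁ : ContDiff ℝ (⊤ : ℕ∞) (deriv α₁) := (contDiff_infty_iff_deriv.mp hα₁).2
  have hd₂ : ContDiff ℝ (⊤ : ℕ∞) (deriv α₂) := (contDiff_infty_iff_deriv.mp hα₂).2
  have hdd₂ : ContDiff ℝ (⊤ : ℕ∞) (deriv (deriv α₂)) := (contDiff_infty_iff_deriv.mp hd₂).2
  have hD₁ : ∀ s, HasDerivAt (deriv α₁) (deriv (deriv α₁) s) s := fun s =>
    ((contDiff_infty_iff_deriv.mp hd₁).1 s).hasDerivAt
  have hD₂ : ∀ s, HasDerivAt (deriv α₂) (deriv (deriv α₂) s) s := fun s =>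
    ((contDiff_infty_iff_deriv.mp hd₂).1 s).hasDerivAt
  have hab : ∀ s ∈ I, deriv (deriv α₁) s = deriv α₁ s * deriv α₂ s := by
    intro s hs
    have hsin := left_ne_zero_of_mul (hsc s hs)
    have hcos := right_ne_zero_of_mul (hsc s hs)
    have htc : Real.tan (α₁ s) + Real.cot (α₁ s) ≠ 0 := by
      have : Real.tan (α₁ s) + Real.cot (α₁ s)
          = 1 / (Real.sin (α₁ s) * Real.cos (α₁ s)) := by
        rw [Real.tan_eq_sin_div_cos, Real.cot_eq_cos_div_sin]
        field_simp
        exact Real.sin_sq_add_cos_sq _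
      rw [this]
      exact one_div_ne_zero (hsc s hs)
    have hprod : (deriv (deriv α₁) s - deriv α₁ s * deriv α₂ s)
        * (Real.tan (α₁ s) + Real.cot (α₁ s)) = 0 := by
      linear_combination hE2 s hs - hE3 s hs
    exact sub_eq_zero.mp ((mul_eq_zero.mp hprod).resolve_right htc)
  have hfirst : ∀ s ∈ I, 2 + deriv (deriv α₂) s
      = deriv (deriv α₁) s * (Real.cot (α₁ s) - Real.tan (α₁ s)) := by
    intro s hs
    linear_combination hE1 s hs - hE2 s hs + Real.tan (α₁ s) * hab s hs - 2 * hunit s hs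
  have hmul : ∀ s ∈ I, deriv α₂ s * (deriv (deriv α₂) s + (deriv α₁ s) ^ 2) = 0 := by
    intro s hs
    have h1 := ((hD₁ s).pow 2).add ((hD₂ s).pow 2)
    have h2 : HasDerivAt (deriv α₁ ^ 2 + deriv α₂ ^ 2) 0 s := by
      refine (hasDerivAt_const s (1 : ℝ)).congr_of_eventuallyEq ?_
      filter_upwards [hIopen.mem_nhds hs] with t ht
      exact hunit t ht
    have h3 := h1.unique h2
    norm_num at h3
    linear_combination h3 / 2 - deriv α₁ s * hab s hs
  intro s hs
  refine ⟨hfirst s hs, ?_⟩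
  refine eq_neg_of_add_eq_zero_left
    (eq_zero_of_mul_eventually_eq_zero
      (f := fun t => deriv (deriv α₂) t + (deriv α₁ t) ^ 2)
      (hdd₂.continuous.add (hd₁.continuous.pow 2)).continuousAt (hD₂ s) ?_ ?_)
  · filter_upwards [hIopen.mem_nhds hs] with t ht
    exact hmul t ht
  · intro hb h
    have h1 := hfirst s hs
    rw [hab s hs, hb, h] at h1
    norm_num at h1
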